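/- Let p be an odd prime, Δ an integer not divisible by p, and let k be a natural number. Consider the quadratic form in n = 2k+1 variables B(x₀, x₁, …, x_{2k}) = Δ·x₀² + ∑_{i=1}^{k} x_{2i−1}·x_{2i}. For a natural number ℓ let X_ℓ = N_ℓ / p^{nℓ}, where N_ℓ is the number of v ∈ (ℤ/p^ℓℤ)^n with B(v) = 0. Then for every real z with |z| < 1, the series ∑_{ℓ≥0} z^ℓ · (X_ℓ − X_{ℓ+1}) converges with sum (1 − z·p^{−n})(1 − p^{−1}) / ((1 − z/p)(1 − z²·p^{−n})). -/

import Mathlib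

open Finset

theorem ix0 (k : ℕ) : 0 < 2 * k + 1 := by omega

theorem ix1 (k : ℕ) (i : Fin k) : 2 * (i : ℕ) + 1 < 2 * k + 1 := by have := i.isLt; omega

theorem ix2 (k : ℕ) (i : Fin k) : 2 * (i : ℕ) + 2 < 2 * k + 1 := by have := i.isLt; omega

def QQ {R : Type*} [CommRing R] (Δ : ℤ) (k : ℕ) (v : Fin (2 * k + 1) → R) : R :=
  (Δ : R) * v ⟨0, ix0 k⟩ ^ 2 + ∑ i : Fin k, v ⟨2 * i + 1, ix1 k i⟩ * v ⟨2 * i + 2, ix2 k i⟩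

noncomputable def NN (Δ : ℤ) (k q : ℕ) : ℕ :=
  Nat.card {v : Fin (2 * k + 1) → ZMod q // QQ Δ k v = 0}

theorem QQ_map {R S : Type*} [CommRing R] [CommRing S] (f : R →+* S) (Δ : ℤ) (k : ℕ)
    (v : Fin (2 * k + 1) → R) : f (QQ Δ k v) = QQ Δ k (fun i => f (v i)) := by
  simp [QQ]

theorem QQ_snoc {R : Type*} [CommRing R] (Δ : ℤ) (k : ℕ) (v : Fin (2 * k + 1) → R) (x y : R) :
    QQ Δ (k+1) (Fin.snoc (α := fun _ => R) (Fin.snoc (α := fun _ => R) v x) y : Fin (2 * k + 1 + 1 + 1) → R)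
      = QQ Δ k v + x * y := by
  simp only [QQ, Fin.sum_univ_castSucc]
  have h0 : ∀ w : Fin (2 * k + 1 + 1) → R, ∀ i : ℕ, ∀ h : i < 2 * k + 1 + 1,
      (Fin.snoc (α := fun _ => R) w y : Fin (2 * k + 1 + 1 + 1) → R) ⟨i, by omega⟩ = w ⟨i, h⟩ := by
    intro w i h
    exact Fin.snoc_castSucc (α := fun _ => R) y w ⟨i, h⟩
  have h1 : ∀ i : ℕ, ∀ h : i < 2 * k + 1,
      (Fin.snoc (α := fun _ => R) v x : Fin (2 * k + 1 + 1) → R) ⟨i, by omega⟩ = v ⟨i, h⟩ := by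
    intro i h
    exact Fin.snoc_castSucc (α := fun _ => R) x v ⟨i, h⟩
  have h2 : ∀ w : Fin (2 * k + 1 + 1) → R, 
      (Fin.snoc (α := fun _ => R) w y : Fin (2 * k + 1 + 1 + 1) → R) ⟨2 * k + 2, by omega⟩ = y := by
    intro w
    exact Fin.snoc_last (α := fun _ => R) y w
  have h3 : (Fin.snoc (α := fun _ => R) v x : Fin (2 * k + 1 + 1) → R) ⟨2 * k + 1, by omega⟩ = x :=
    Fin.snoc_last (α := fun _ => R) x v
  rw [← add_assoc]
  congr 1
  · congr 1
    · refine Finset.sum_congr rfl fun i _ => ?_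
      have := i.isLt
      simp only [Fin.val_castSucc]
      rw [h0 _ (2 * i + 1) (by omega), h1 (2*i+1) (by omega),
        h0 _ (2 * i + 2) (by omega), h1 (2*i+2) (by omega)]
  · simp only [Fin.val_last]
    rw [h0 _ (2 * k + 1) (by omega), h2, h3]

theorem card_red {G H : Type*} [AddCommGroup G] [AddCommGroup H] [Finite G] [Finite H]
    (f : G →+ H) (hf : Function.Surjective f) (P : H → Prop) :
    Nat.card {g : G // P (f g)} * Nat.card H = Nat.card G * Nat.card {h : H // P h} := by
  have fib : ∀ h : H, Nonempty ({g : G // f g = h} ≃ f.ker) := by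
    intro h
    obtain ⟨g0, hg0⟩ := hf h
    refine ⟨⟨fun g => ⟨g.1 - g0, by simp [AddMonoidHom.mem_ker, g.2, hg0]⟩,
      fun g => ⟨g.1 + g0, by have := g.2; rw [AddMonoidHom.mem_ker] at this; simp [this, hg0]⟩, ?_, ?_⟩⟩
    · intro g; simp
    · intro g; simp
  have e1 : {g : G // P (f g)} ≃ Σ h : {h : H // P h}, {g : G // f g = h.1} :=
    { toFun := fun g => ⟨⟨f g.1, g.2⟩, ⟨g.1, rfl⟩⟩
      invFun := fun a => ⟨a.2.1, by rw [a.2.2]; exact a.1.2⟩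
      left_inv := fun g => rfl
      right_inv := by
        rintro ⟨⟨h, hh⟩, ⟨g, hg⟩⟩
        change f g = h at hg
        subst hg
        rfl }
  have e3 : Nat.card {g : G // P (f g)} = Nat.card {h : H // P h} * Nat.card f.ker := by
    have := Fintype.ofFinite {h : H // P h}
    rw [Nat.card_congr e1, Nat.card_sigma,
      Finset.sum_congr rfl (fun h _ => Nat.card_congr (fib h.1).some)]
    simp
  have e2 : Nat.card G = Nat.card H * Nat.card f.ker := by
    rw [AddSubgroup.card_eq_card_quotient_mul_card_addSubgroup f.ker,
      Nat.card_congr (QuotientAddGroup.quotientKerEquivOfSurjective f hf).toEquiv]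
  rw [e3, e2]
  ring

theorem castHom_eq_zero {q d : ℕ} (hq : q ≠ 0) (hd : d ∣ q) (c : ZMod q) :
    ZMod.castHom hd (ZMod d) c = 0 ↔ d ∣ c.val := by
  have : NeZero q := ⟨hq⟩
  conv_lhs => rw [← ZMod.natCast_zmod_val c]
  rw [map_natCast, ZMod.natCast_eq_zero_iff]

theorem card_lin {q x : ℕ} (hq : q ≠ 0) (c : ZMod q) :
    Nat.card {y : ZMod q // c + x * y = 0} =
      open Classical in if ZMod.castHom (Nat.gcd_dvd_left q x) (ZMod (q.gcd x)) c = 0 then q.gcd x else 0 := by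
  have : NeZero q := ⟨hq⟩
  have hd0 : q.gcd x ≠ 0 := by simp [hq]
  have : NeZero (q.gcd x) := ⟨hd0⟩
  let f : ZMod q →+ ZMod q := AddMonoidHom.mulLeft (x : ZMod q)
  let g := ZMod.castHom (Nat.gcd_dvd_left q x) (ZMod (q.gcd x))
  have hrange : f.range = g.toAddMonoidHom.ker := by
    ext c
    constructor
    · rintro ⟨y, rfl⟩
      show g (x * y) = 0
      rw [map_mul, map_natCast, (ZMod.natCast_eq_zero_iff _ _).2 (Nat.gcd_dvd_right q x), zero_mul]
    · intro h
      have h : g c = 0 := h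
      rw [castHom_eq_zero hq] at h
      obtain ⟨t, ht⟩ := h
      have hb := congrArg (Int.cast : ℤ → ZMod q) (Nat.gcd_eq_gcd_ab q x)
      push_cast at hb
      simp only [ZMod.natCast_self, zero_mul, zero_add] at hb
      refine ⟨(q.gcdB x : ZMod q) * t, ?_⟩
      show (x : ZMod q) * _ = c
      rw [← mul_assoc, ← hb, ← Nat.cast_mul, ← ht, ZMod.natCast_zmod_val]
  have hker : Nat.card f.ker = q.gcd x := by
    have a1 := AddSubgroup.card_eq_card_quotient_mul_card_addSubgroup f.ker
    rw [Nat.card_congr (QuotientAddGroup.quotientKerEquivRange f).toEquiv, hrange] at a1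
    have a2 := AddSubgroup.card_eq_card_quotient_mul_card_addSubgroup g.toAddMonoidHom.ker
    rw [Nat.card_congr (QuotientAddGroup.quotientKerEquivOfSurjective g.toAddMonoidHom
      (ZMod.castHom_surjective (Nat.gcd_dvd_left q x))).toEquiv, a1, Nat.card_zmod, mul_comm] at a2
    have : 0 < Nat.card g.toAddMonoidHom.ker := Nat.card_pos
    exact Nat.eq_of_mul_eq_mul_right this a2
  split_ifs with h
  · have : -c ∈ f.range := by rw [hrange]; show g (-c) = 0; rw [map_neg]; simpa [g] using h
    obtain ⟨y0, hy0⟩ := this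
    have hy0 : (x : ZMod q) * y0 = -c := hy0
    rw [← hker]
    refine Nat.card_congr ⟨fun y => ⟨y.1 - y0, ?_⟩, fun y => ⟨y.1 + y0, ?_⟩, ?_, ?_⟩
    · show (x : ZMod q) * _ = 0
      rw [mul_sub, hy0]; linear_combination y.2
    · have : (x : ZMod q) * y = 0 := y.2
      rw [mul_add, this, hy0]; ring
    · intro y; simp
    · intro y; simp
  · rw [Nat.card_eq_zero]
    left
    refine ⟨fun y => h ?_⟩
    have : -c ∈ f.range := ⟨y.1, by show (x : ZMod q) * _ = _; linear_combination y.2⟩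
    rw [hrange] at this
    have : g (-c) = 0 := this
    rw [map_neg] at this
    simpa [g] using this

theorem red (Δ : ℤ) (k : ℕ) {q d : ℕ} (hq : q ≠ 0) (hd : d ∣ q) :
    Nat.card {v : Fin (2 * k + 1) → ZMod q // ZMod.castHom hd (ZMod d) (QQ Δ k v) = 0} * d ^ (2 * k + 1)
      = q ^ (2 * k + 1) * NN Δ k d := by
  have : NeZero q := ⟨hq⟩
  have : NeZero d := ⟨fun h => hq (by subst h; simpa using hd)⟩
  have := card_red (G := Fin (2 * k + 1) → ZMod q) (H := Fin (2 * k + 1) → ZMod d)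
    ((ZMod.castHom hd (ZMod d)).toAddMonoidHom.compLeft _)
    (fun w => by
      choose v hv using fun i => ZMod.castHom_surjective hd (w i)
      exact ⟨v, funext hv⟩) (fun w => QQ Δ k w = 0)
  simp only [Nat.card_fun, Nat.card_zmod, Nat.card_eq_fintype_card (α := Fin _), Fintype.card_fin] at this
  rw [NN, ← this]
  congr 2
  simp only [QQ_map]
  rfl

theorem NN_succ (Δ : ℤ) (k : ℕ) {q : ℕ} (hq : q ≠ 0) :
    (NN Δ (k+1) q : ℝ) / q ^ (2 * k + 1) =
      ∑ d ∈ q.divisors, (Nat.totient (q / d) : ℝ) * (d * (NN Δ k d / d ^ (2 * k + 1))) := by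
  classical
  have : NeZero q := ⟨hq⟩
  let E : ZMod q × (Fin (2 * k + 1) → ZMod q) × ZMod q ≃ (Fin (2 * (k+1) + 1) → ZMod q) :=
    { toFun := fun a => Fin.snoc (α := fun _ => ZMod q) (n := 2 * k + 2)
          (Fin.snoc (α := fun _ => ZMod q) a.2.1 a.1) a.2.2
      invFun := fun w => (Fin.init (α := fun _ => ZMod q) (n := 2 * k + 2) w (Fin.last (2 * k + 1)),
        Fin.init (α := fun _ => ZMod q) (n := 2 * k + 1)
          (Fin.init (α := fun _ => ZMod q) (n := 2 * k + 2) w),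
        w (Fin.last (2 * k + 2)))
      left_inv := by
        rintro ⟨x, v, y⟩
        have a1 : Fin.init (α := fun _ => ZMod q) (n := 2 * k + 2)
          (Fin.snoc (α := fun _ => ZMod q) (n := 2 * k + 2)
          (Fin.snoc (α := fun _ => ZMod q) v x) y) = Fin.snoc (α := fun _ => ZMod q) v x :=
            Fin.init_snoc _ _
        have a2 : Fin.init (α := fun _ => ZMod q) (n := 2 * k + 1)
          (Fin.snoc (α := fun _ => ZMod q) v x) = v := Fin.init_snoc _ _
        refine Prod.ext ?_ (Prod.ext ?_ ?_)
        · exact (congrFun a1 _).trans (Fin.snoc_last _ _)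
        · exact (congrArg (Fin.init (α := fun _ => ZMod q) (n := 2 * k + 1)) a1).trans a2
        · exact Fin.snoc_last (α := fun _ => ZMod q) (n := 2 * k + 2) _ _
      right_inv := by
        intro w
        simp only [Fin.snoc_init_self] }
  have e : (Σ x : ZMod q, Σ v : Fin (2 * k + 1) → ZMod q, {y : ZMod q // QQ Δ k v + x * y = 0}) ≃
      {v : Fin (2 * (k+1) + 1) → ZMod q // QQ Δ (k+1) v = 0} :=
    Equiv.trans (β := {a : ZMod q × (Fin (2 * k + 1) → ZMod q) × ZMod q //
        QQ Δ k a.2.1 + a.1 * a.2.2 = 0})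
      { toFun := fun a => ⟨(a.1, a.2.1, a.2.2.1), a.2.2.2⟩
        invFun := fun a => ⟨a.1.1, a.1.2.1, a.1.2.2, a.2⟩
        left_inv := fun _ => rfl
        right_inv := fun _ => rfl }
      (E.subtypeEquiv (fun a => by
        show _ ↔ QQ Δ (k+1) (Fin.snoc (α := fun _ => ZMod q) (n := 2 * k + 2)
          (Fin.snoc (α := fun _ => ZMod q) a.2.1 a.1) a.2.2) = 0
        rw [QQ_snoc]))
  have h1 : NN Δ (k+1) q = ∑ x ∈ range q, q.gcd x *
      Nat.card {v : Fin (2 * k + 1) → ZMod q //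
        ZMod.castHom (Nat.gcd_dvd_left q x) (ZMod (q.gcd x)) (QQ Δ k v) = 0} := by
    rw [NN, ← Nat.card_congr e, Nat.card_sigma]
    symm
    refine Finset.sum_bij' (fun x _ => (x : ZMod q)) (fun x _ => x.val) ?_ ?_ ?_ ?_ ?_
    · simp
    · intro a _; simpa using ZMod.val_lt a
    · intro a ha; exact ZMod.val_cast_of_lt (by simpa using ha)
    · intro a _; simp
    · intro x _
      rw [Nat.card_sigma]
      simp only [card_lin hq]
      rw [← Finset.sum_filter, Finset.sum_const, smul_eq_mul, mul_comm, Nat.card_eq_fintype_card,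
        Fintype.card_subtype]
  have hq' : (q : ℝ) ≠ 0 := by exact_mod_cast hq
  have h2 : (NN Δ (k+1) q : ℝ) / q ^ (2 * k + 1) = ∑ x ∈ range q,
      (fun d : ℕ => (d : ℝ) * (NN Δ k d / d ^ (2 * k + 1))) (q.gcd x) := by
    rw [h1]
    push_cast
    rw [Finset.sum_div]
    refine Finset.sum_congr rfl fun x _ => ?_
    have := red Δ k hq (Nat.gcd_dvd_left q x)
    have hd : ((q.gcd x : ℕ) : ℝ) ≠ 0 := by simp [hq]
    have this : (_ : ℝ) = _ := congrArg (Nat.cast : ℕ → ℝ) this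
    push_cast at this
    rw [mul_div_assoc]
    congr 1
    rw [div_eq_div_iff (pow_ne_zero _ hq') (pow_ne_zero _ hd), this]
    ring
  rw [h2, ← Finset.sum_fiberwise_of_maps_to (g := fun x => q.gcd x) (t := q.divisors)]
  · refine Finset.sum_congr rfl fun d hd => ?_
    rw [Nat.totient_div_of_dvd (Nat.dvd_of_mem_divisors hd), ← nsmul_eq_mul, ← Finset.sum_const]
    refine Finset.sum_congr rfl fun x hx => ?_
    simp only [Finset.mem_filter] at hx
    rw [hx.2]
  · intro x _
    simp [hq, Nat.gcd_dvd_left]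

theorem base (p : ℕ) (hp : p.Prime) (Δ : ℤ) (hΔ : ¬ (p : ℤ) ∣ Δ) (l : ℕ) :
    (NN Δ 0 (p ^ l) : ℝ) / (p ^ l : ℕ) = (p : ℝ)⁻¹ ^ ((l + 1) / 2) := by
  have hp0 : p ≠ 0 := hp.ne_zero
  have hq : p ^ l ≠ 0 := pow_ne_zero _ hp0
  have hdvd : p ^ ((l + 1) / 2) ∣ p ^ l := pow_dvd_pow p (by omega)
  have : NeZero (p ^ l) := ⟨hq⟩
  have : NeZero (p ^ ((l + 1) / 2)) := ⟨pow_ne_zero _ hp0⟩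
  have hu : IsUnit (Δ : ZMod (p ^ l)) := by
    rw [ZMod.coe_int_isUnit_iff_isCoprime]
    push_cast
    exact ((Nat.prime_iff_prime_int.1 hp).coprime_iff_not_dvd.2 hΔ).pow_left
  have hiff : ∀ a : ZMod (p ^ l), (Δ : ZMod (p ^ l)) * a ^ 2 = 0 ↔
      ZMod.castHom hdvd (ZMod (p ^ ((l + 1) / 2))) a = 0 := by
    intro a
    rw [hu.mul_right_eq_zero, castHom_eq_zero hq]
    conv_lhs => rw [← ZMod.natCast_zmod_val a]
    rw [← Nat.cast_pow, ZMod.natCast_eq_zero_iff]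
    by_cases ha : a.val = 0
    · simp [ha]
    · have : Fact p.Prime := ⟨hp⟩
      rw [padicValNat_dvd_iff_le (pow_ne_zero 2 ha), padicValNat_dvd_iff_le ha,
        padicValNat.pow]
      omega
  have hN : NN Δ 0 (p ^ l) = Nat.card {a : ZMod (p ^ l) //
      ZMod.castHom hdvd (ZMod (p ^ ((l + 1) / 2))) a = 0} := by
    refine Nat.card_congr ((Equiv.funUnique (Fin 1) (ZMod (p ^ l))).subtypeEquiv ?_)
    intro v
    rw [← hiff]
    simp [QQ]
  have h := card_red (ZMod.castHom hdvd (ZMod (p ^ ((l + 1) / 2)))).toAddMonoidHom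
    (ZMod.castHom_surjective hdvd) (fun a => a = 0)
  have h' : Nat.card {a : ZMod (p ^ l) //
      ZMod.castHom hdvd (ZMod (p ^ ((l + 1) / 2))) a = 0} * p ^ ((l + 1) / 2) = p ^ l := by
    simpa using h
  rw [← hN] at h'
  have hpr : (p : ℝ) ≠ 0 := by exact_mod_cast hp0
  have h'' := congrArg (Nat.cast : ℕ → ℝ) h'
  rw [inv_pow, div_eq_iff (by exact_mod_cast hq), ← h'']
  push_cast
  field_simp

theorem X_succ (p : ℕ) (hp : p.Prime) (Δ : ℤ) (Y : ℕ → ℕ → ℝ)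
    (hY : ∀ k l, Y k l = (NN Δ k (p ^ l) : ℝ) / p ^ ((2 * k + 1) * l)) (k l : ℕ) :
    Y (k+1) l * p ^ (2 * l) =
      ∑ j ∈ range (l + 1), (Nat.totient (p ^ (l - j)) : ℝ) * (p ^ j * Y k j) := by
  have hp0 : p ≠ 0 := hp.ne_zero
  have hpr : (p : ℝ) ≠ 0 := by exact_mod_cast hp0
  have h := NN_succ Δ k (q := p ^ l) (pow_ne_zero _ hp0)
  rw [Nat.sum_divisors_prime_pow hp] at h
  have e : Y (k+1) l * p ^ (2 * l) = (NN Δ (k+1) (p ^ l) : ℝ) / ((p ^ l : ℕ) : ℝ) ^ (2 * k + 1) := by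
    rw [hY]
    push_cast
    field_simp
    ring
  rw [e, h]
  refine Finset.sum_congr rfl fun j hj => ?_
  rw [Nat.pow_div (by simpa [Nat.lt_succ_iff] using hj) hp.pos, hY]
  push_cast
  rw [← pow_mul, mul_comm j]

theorem X_step (p : ℕ) (hp : p.Prime) (Δ : ℤ) (Y : ℕ → ℕ → ℝ)
    (hY : ∀ k l, Y k l = (NN Δ k (p ^ l) : ℝ) / p ^ ((2 * k + 1) * l)) (k l : ℕ) :
    Y (k+1) (l+1) = (p : ℝ)⁻¹ * Y (k+1) l + (p : ℝ)⁻¹ ^ (l + 1) * (Y k (l+1) - (p : ℝ)⁻¹ * Y k l) := by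
  have hp0 : p ≠ 0 := hp.ne_zero
  have hpr : (p : ℝ) ≠ 0 := by exact_mod_cast hp0
  have main : ∀ l, Y (k+1) l * p ^ l = (1 - (p : ℝ)⁻¹) * ∑ j ∈ range l, Y k j + Y k l := by
    intro l
    have h := X_succ p hp Δ Y hY k l
    rw [Finset.sum_range_succ] at h
    have h2 : ∑ j ∈ range l, (Nat.totient (p ^ (l - j)) : ℝ) * (p ^ j * Y k j) =
        p ^ l * ((1 - (p : ℝ)⁻¹) * ∑ j ∈ range l, Y k j) := by
      rw [Finset.mul_sum, Finset.mul_sum]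
      refine Finset.sum_congr rfl fun j hj => ?_
      obtain ⟨m, rfl⟩ : ∃ m, l = j + (m + 1) := ⟨l - j - 1, by simp at hj; omega⟩
      rw [Nat.add_sub_cancel_left, Nat.totient_prime_pow_succ hp]
      push_cast [hp.one_le]
      field_simp
      ring
    rw [h2] at h
    simp only [Nat.sub_self, pow_zero, Nat.totient_one, Nat.cast_one, one_mul] at h
    have hpl : (p : ℝ) ^ l ≠ 0 := pow_ne_zero _ hpr
    apply mul_left_cancel₀ hpl
    linear_combination h
  have h1 := main l
  have h2 := main (l + 1)
  rw [Finset.sum_range_succ] at h2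
  have hpl : (p : ℝ) ^ (l + 1) ≠ 0 := pow_ne_zero _ hpr
  apply mul_right_cancel₀ hpl
  have e1 : (p : ℝ)⁻¹ ^ (l + 1) * p ^ (l + 1) = 1 := by rw [← mul_pow, inv_mul_cancel₀ hpr, one_pow]
  have e2 : (p : ℝ)⁻¹ * p ^ (l + 1) = p ^ l := by rw [pow_succ]; field_simp
  linear_combination h2 - h1 - Y (k+1) l * e2 - (Y k (l+1) - (p : ℝ)⁻¹ * Y k l) * e1

theorem X_rec (t : ℝ) (Y : ℕ → ℕ → ℝ) (h00 : ∀ l, Y 0 l = t ^ ((l + 1) / 2))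
    (hz : ∀ k, Y k 0 = 1)
    (hs : ∀ k l, Y (k+1) (l+1) = t * Y (k+1) l + t ^ (l + 1) * (Y k (l+1) - t * Y k l)) (k : ℕ) :
    Y k 1 = t ∧ ∀ l, Y k (l+2) = (1 - t ^ (2 * k)) * t ^ (l + 2) + t ^ (2 * k + 1) * Y k l := by
  induction k with
  | zero =>
    refine ⟨by simp [h00], fun l => ?_⟩
    rw [h00, h00, show (l + 2 + 1) / 2 = (l + 1) / 2 + 1 by omega]
    ring
  | succ k ih =>
    have h1 : Y (k+1) 1 = t := by rw [hs, hz, ih.1, hz]; ring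
    refine ⟨h1, fun l => ?_⟩
    induction l with
    | zero =>
      rw [hs, h1, ih.2 0, ih.1, hz, hz]; ring
    | succ l ihl =>
      rw [show l + 1 + 2 = (l + 2) + 1 by ring, hs, ihl, show l + 2 + 1 = (l + 1) + 2 by ring,
        ih.2 (l+1), ih.2 l, hs k l]
      ring

theorem final_sum (t z s : ℝ) (ht0 : 0 < t) (ht1 : t < 1) (hs0 : 0 ≤ s) (hs1 : s ≤ 1) (hz : |z| < 1)
    (X : ℕ → ℝ) (hX0 : X 0 = 1) (hX1 : X 1 = t) (hb : ∀ l, |X l| ≤ 1)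
    (hr : ∀ l, X (l+2) = (1 - s) * t ^ (l + 2) + s * t * X l) :
    HasSum (fun l : ℕ => z ^ l * (X l - X (l + 1)))
      ((1 - z * (s * t)) * (1 - t) / ((1 - z * t) * (1 - z ^ 2 * (s * t)))) := by
  have hzt : |z * t| < 1 := by
    rw [abs_mul, abs_of_pos ht0]; nlinarith [abs_nonneg z]
  have hst : s * t < 1 := by nlinarith
  have hst0 : 0 ≤ s * t := by positivity
  have hz2 : z ^ 2 < 1 := by rw [← sq_abs]; nlinarith [abs_nonneg z]
  have n1 : 1 - z * t ≠ 0 := by have := (abs_lt.1 hzt).2; linarith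
  have n2 : 1 - z ^ 2 * (s * t) ≠ 0 := by nlinarith [sq_nonneg z]
  have hsum : Summable (fun l : ℕ => z ^ l * (X l - X (l + 1))) := by
    refine Summable.of_norm_bounded (g := fun l => 2 * |z| ^ l)
      ((summable_geometric_of_lt_one (abs_nonneg z) hz).mul_left 2) ?_
    intro l
    rw [Real.norm_eq_abs, abs_mul, abs_pow]
    have : |X l - X (l+1)| ≤ 2 := (abs_sub _ _).trans (by linarith [hb l, hb (l+1)])
    nlinarith [pow_nonneg (abs_nonneg z) l]
  obtain ⟨S, hS⟩ := hsum
  have hS2 := (hasSum_nat_add_iff' 2).2 hS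
  have hg := (hasSum_geometric_of_abs_lt_one hzt).mul_left ((1 - s) * (1 - t) * (z * t) ^ 2)
  have hT := hg.add (hS.mul_left (z ^ 2 * (s * t)))
  have heq : (fun l : ℕ => z ^ (l + 2) * (X (l + 2) - X (l + 2 + 1))) = fun l =>
      (1 - s) * (1 - t) * (z * t) ^ 2 * (z * t) ^ l + z ^ 2 * (s * t) * (z ^ l * (X l - X (l + 1))) := by
    funext l
    rw [show l + 2 + 1 = (l + 1) + 2 by ring, hr, hr]
    ring
  rw [heq] at hS2
  have := hS2.unique hT
  have hX2 := hr 0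
  simp only [Finset.sum_range_succ, Finset.sum_range_zero, hX0, hX1] at this
  norm_num at this
  norm_num [hX0] at hX2
  rw [hX2] at this
  convert hS using 1
  rw [div_eq_iff (mul_ne_zero n1 n2)]
  have e : (1 - z * t)⁻¹ * (1 - z * t) = 1 := inv_mul_cancel₀ n1
  linear_combination (-(1 - z * t)) * this - (1 - s) * (1 - t) * (z * t) ^ 2 * e



theorem stmt_18 (p : ℕ) (hp : p.Prime) (hp2 : p ≠ 2) (Δ : ℤ) (hΔ : ¬ (p : ℤ) ∣ Δ)
    (k : ℕ) (X : ℕ → ℝ)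
    (hX : ∀ ℓ : ℕ, X ℓ =
      (Nat.card {v : Fin (2 * k + 1) → ZMod (p ^ ℓ) //
          (Δ : ZMod (p ^ ℓ)) * v ⟨0, by omega⟩ ^ 2 +
            ∑ i : Fin k, v ⟨2 * i + 1, by have := i.isLt; omega⟩ *
              v ⟨2 * i + 2, by have := i.isLt; omega⟩
            = 0} : ℝ) / p ^ ((2 * k + 1) * ℓ))
    (z : ℝ) (hz : |z| < 1) :
    HasSum (fun ℓ : ℕ => z ^ ℓ * (X ℓ - X (ℓ + 1)))
      ((1 - z * (p : ℝ) ^ (-(2 * k + 1 : ℤ))) * (1 - (p : ℝ)⁻¹)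
        / ((1 - z / p) * (1 - z ^ 2 * (p : ℝ) ^ (-(2 * k + 1 : ℤ))))) := by
  let Y : ℕ → ℕ → ℝ := fun k l => (NN Δ k (p ^ l) : ℝ) / p ^ ((2 * k + 1) * l)
  have hY : ∀ k l, Y k l = (NN Δ k (p ^ l) : ℝ) / p ^ ((2 * k + 1) * l) := fun _ _ => rfl
  have hXY : ∀ l, X l = Y k l := fun l => hX l
  have hp0 : (0 : ℝ) < p := by exact_mod_cast hp.pos
  have hp1 : (1 : ℝ) < p := by exact_mod_cast hp.one_lt
  have h00 : ∀ l, Y 0 l = (p : ℝ)⁻¹ ^ ((l + 1) / 2) := by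
    intro l
    rw [← base p hp Δ hΔ l, hY]
    simp
  have hz0 : ∀ k, Y k 0 = 1 := by
    intro k
    have : NN Δ k (p ^ 0) = 1 := by
      rw [NN, pow_zero, Nat.card_eq_one_iff_unique]
      exact ⟨inferInstance, ⟨⟨0, Subsingleton.elim _ _⟩⟩⟩
    rw [hY, this]; simp
  have hrec := X_rec (p : ℝ)⁻¹ Y h00 hz0 (X_step p hp Δ Y hY) k
  have hb : ∀ l, |X l| ≤ 1 := by
    intro l
    have : NeZero (p ^ l) := ⟨pow_ne_zero _ hp.ne_zero⟩
    have h1 : NN Δ k (p ^ l) ≤ p ^ ((2 * k + 1) * l) := by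
      refine (Finite.card_subtype_le _).trans ?_
      rw [Nat.card_fun]
      simp [← pow_mul, mul_comm]
    rw [hXY, hY, abs_of_nonneg (by positivity)]
    apply div_le_one_of_le₀ _ (by positivity)
    exact_mod_cast h1
  have ht0 : 0 < (p : ℝ)⁻¹ := by positivity
  have ht1 : (p : ℝ)⁻¹ < 1 := inv_lt_one_of_one_lt₀ hp1
  have hfin := final_sum (p : ℝ)⁻¹ z ((p : ℝ)⁻¹ ^ (2 * k)) ht0 ht1 (by positivity)
    (pow_le_one₀ ht0.le ht1.le) hz X (by rw [hXY, hz0]) (by rw [hXY, hrec.1]) hb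
    (fun l => by rw [hXY, hXY, hrec.2, pow_succ _ (2 * k)])
  have e : (p : ℝ) ^ (-(2 * k + 1 : ℤ)) = (p : ℝ)⁻¹ ^ (2 * k) * (p : ℝ)⁻¹ := by
    rw [← pow_succ, zpow_neg, inv_pow]
    norm_cast
  rw [e, div_eq_mul_inv z]
  exact hfin
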